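/- Let 𝒱₂(f)(x) = sup_{τ∈ℝ} (Σ_{I∈ℐ} |f * ℱ^{-1}[1̃_{I+τ}](x)|²)^{1/2} where ℐ = ⋃_{k∈ℕ} ℐ_k with ℐ_k = {[k + l/k, k + (l+1)/k] : 0 ≤ l < k}, and 1̃ ∈ C^∞([-1/2,1/2]) chosen with |ℱ^{-1}1̃| ≳ 1_{[-2,2]}. Then with f_N = Σ_{1≤n≤N} φ(x-n)e^{2πinx} (φ̂ between 1_{[-1/4,1/4]} and 1_{[-1/2,1/2]}), one has the pointwise lower bound 𝒱₂(f_N)(x) ≳ (log N)^{1/2} for x ∈ [1, N/2]. Consequently ‖𝒱₂(f_N)‖_p / ‖f_N‖_p ≳ (log N)^{1/2} for every 1 ≤ p < ∞, so 𝒱₂ satisfies no L^p estimates. -/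

import Mathlib

open MeasureTheory FourierTransform

/-- `f_N(x) = Σ_{1≤n≤N} φ(x-n) e^{2πinx}`. -/
noncomputable def fN (φ : SchwartzMap ℝ ℂ) (N : ℕ) (x : ℝ) : ℂ :=
  ∑ n ∈ Finset.Icc 1 N, φ (x - n) * Complex.exp (2 * Real.pi * Complex.I * (n : ℝ) * x)

/-- smooth frequency projection of `f_N` onto the translate by `τ` of the interval
`[k + l/k, k + (l+1)/k] ∈ ℐ_k` (center `k + (l+1/2)/k`, length `1/k`). -/
noncomputable def projV (t : ℝ → ℂ) (φ : SchwartzMap ℝ ℂ) (N k l : ℕ) (τ x : ℝ) : ℂ :=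
  ∫ ξ : ℝ, t ((ξ - ((k : ℝ) + ((l : ℝ) + 1/2) / k) - τ) * k) * 𝓕 (fN φ N) ξ *
    Complex.exp (2 * Real.pi * Complex.I * ξ * x)

/-- square of the square function at translation `τ`. -/
noncomputable def Vsq (t : ℝ → ℂ) (φ : SchwartzMap ℝ ℂ) (N : ℕ) (τ x : ℝ) : ℝ :=
  ∑' k : ℕ, ∑ l ∈ Finset.range k, ‖projV t φ N k l τ x‖ ^ 2

/-- the maximal-translation square function `𝒱₂(f_N)`. -/
noncomputable def V2 (t : ℝ → ℂ) (φ : SchwartzMap ℝ ℂ) (N : ℕ) (x : ℝ) : ℝ :=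
  ⨆ τ : ℝ, Real.sqrt (Vsq t φ N τ x)

/-!
Frequencies `ξ` near an integer `m ∈ [1, N]` see the Fourier transform of `f_N` as a pure phase,
so a frequency projection of `f_N` to an interval of length `1/k` there is a dilated copy of
`ℱ⁻¹ t` centred at `m`, of size `≳ 1/k` on `|x - m| ≤ k`. The blocks `ℐ_k` are spaced like the
integers: translating by `τ ≈ ⌊x⌋ - 2` puts the frequency `m = ⌊x⌋ + i` into the block `k = i + 2`,
for which `|x - m| ≤ k`. Each such block has about `k/2` good intervals, hence contributes `≳ 1/k`
to the square of the square function, and the harmonic sum gives `log N`. For the `L^p`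
statement, `f_N` is bounded uniformly in `N` because `φ` decays, so that `‖f_N‖_p ≲ N^{1/p}`,
while the pointwise bound holds on a set of measure `N/2`.
-/

open scoped ENNReal NNReal

section Fourier

lemma norm_cexp_two_pi_mul_I_mul_mul (a b : ℝ) :
    ‖Complex.exp (2 * Real.pi * Complex.I * a * b)‖ = 1 := by
  rw [show (2 * Real.pi * Complex.I * a * b : ℂ) = (2 * Real.pi * a * b : ℝ) * Complex.I by
    push_cast; ring, Complex.norm_exp_ofReal_mul_I]

lemma integrable_translate_mul_cexp {f : ℝ → ℂ} (hf : Integrable f) (a b : ℝ) :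
    Integrable fun x : ℝ => f (x - a) * Complex.exp (2 * Real.pi * Complex.I * b * x) :=
  (hf.comp_sub_right a).mul_bdd (c := 1) (by fun_prop)
    (.of_forall fun x => (norm_cexp_two_pi_mul_I_mul_mul b x).le)

lemma fourier_translate_mul_cexp (f : ℝ → ℂ) (a b ξ : ℝ) :
    𝓕 (fun x : ℝ => f (x - a) * Complex.exp (2 * Real.pi * Complex.I * b * x)) ξ =
      Complex.exp (2 * Real.pi * Complex.I * a * (b - ξ : ℝ)) * 𝓕 f (ξ - b) := by
  rw [Real.fourier_real_eq_integral_exp_smul, Real.fourier_real_eq_integral_exp_smul,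
    ← integral_const_mul, ← integral_add_right_eq_self _ a]
  refine integral_congr_ae (.of_forall fun y => ?_)
  simp only [smul_eq_mul, add_sub_cancel_right]
  rw [mul_left_comm, ← Complex.exp_add, ← mul_assoc, ← Complex.exp_add, mul_comm]
  congr 2
  push_cast
  ring

lemma fourier_finset_sum {ι : Type*} (s : Finset ι) {f : ι → ℝ → ℂ}
    (hf : ∀ i ∈ s, Integrable (f i)) (ξ : ℝ) :
    𝓕 (fun x => ∑ i ∈ s, f i x) ξ = ∑ i ∈ s, 𝓕 (f i) ξ := by
  simp only [Real.fourier_eq, Finset.smul_sum]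
  exact integral_finsetSum s fun i hi => (Real.fourierIntegral_convergent_iff ξ).2 (hf i hi)

lemma integral_comp_sub_mul {E : Type*} [NormedAddCommGroup E] [NormedSpace ℝ E]
    (G : ℝ → E) (c a : ℝ) : ∫ ξ, G ((ξ - c) * a) = |a⁻¹| • ∫ u, G u := by
  rw [integral_sub_right_eq_self (fun ξ => G (ξ * a)) c, Measure.integral_comp_mul_right]

lemma norm_integral_comp_sub_mul_mul_cexp (t : ℝ → ℂ) (c y : ℝ) {a : ℝ} (ha : 0 < a) :
    ‖∫ ξ : ℝ, t ((ξ - c) * a) * Complex.exp (2 * Real.pi * Complex.I * ξ * y)‖ =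
      a⁻¹ * ‖∫ u : ℝ, t u * Complex.exp (2 * Real.pi * Complex.I * u * (y / a : ℝ))‖ := by
  have hphase (ξ : ℝ) : t ((ξ - c) * a) * Complex.exp (2 * Real.pi * Complex.I * ξ * y) =
      Complex.exp (2 * Real.pi * Complex.I * c * y) * (t ((ξ - c) * a) *
        Complex.exp (2 * Real.pi * Complex.I * ((ξ - c) * a : ℝ) * (y / a : ℝ))) := by
    rw [mul_left_comm, ← Complex.exp_add]
    congr 2
    have : (a : ℂ) ≠ 0 := by exact_mod_cast ha.ne'
    push_cast
    field_simp
    ring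
  simp_rw [hphase]
  rw [integral_const_mul, norm_mul, norm_cexp_two_pi_mul_I_mul_mul, one_mul,
    integral_comp_sub_mul (fun u : ℝ => t u *
      Complex.exp (2 * Real.pi * Complex.I * u * (y / a : ℝ))) c a,
    norm_smul, Real.norm_of_nonneg (abs_nonneg _), abs_of_pos (inv_pos.2 ha)]

lemma norm_integral_comp_sub_mul_mul_mul_cexp_le {t g : ℝ → ℂ} (ht : Integrable t) {C : ℝ}
    (hg : ∀ ξ, ‖g ξ‖ ≤ C) (c x : ℝ) {a : ℝ} (ha : 0 < a) :
    ‖∫ ξ : ℝ, t ((ξ - c) * a) * g ξ * Complex.exp (2 * Real.pi * Complex.I * ξ * x)‖ ≤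
      C * (∫ u, ‖t u‖) / a := by
  have hint : Integrable fun ξ : ℝ => ‖t ((ξ - c) * a)‖ * C :=
    (((ht.comp_mul_right' ha.ne').comp_sub_right c).norm.mul_const C)
  refine (norm_integral_le_of_norm_le hint (.of_forall fun ξ => ?_)).trans_eq ?_
  · rw [norm_mul, norm_mul, norm_cexp_two_pi_mul_I_mul_mul, mul_one]
    gcongr
    exact hg ξ
  · rw [integral_mul_const, integral_comp_sub_mul (fun u => ‖t u‖), abs_of_pos (inv_pos.2 ha),
      smul_eq_mul]
    ring

end Fourier

section TestFunction

variable {φ : SchwartzMap ℝ ℂ}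

lemma fourier_fN (φ : SchwartzMap ℝ ℂ) (N : ℕ) (ξ : ℝ) :
    𝓕 (fN φ N) ξ = ∑ n ∈ Finset.Icc 1 N,
      Complex.exp (2 * Real.pi * Complex.I * (n : ℝ) * (n - ξ : ℝ)) * 𝓕 ⇑φ (ξ - n) := by
  simp_rw [← fourier_translate_mul_cexp]
  exact fourier_finset_sum (Finset.Icc 1 N)
    (fun n _ => integrable_translate_mul_cexp φ.integrable (n : ℝ) (n : ℝ)) ξ

lemma norm_fourier_fN_le (φ : SchwartzMap ℝ ℂ) (N : ℕ) (ξ : ℝ) :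
    ‖𝓕 (fN φ N) ξ‖ ≤ ∫ x, ‖fN φ N x‖ :=
  VectorFourier.norm_fourierIntegral_le_integral_norm _ _ _ _ _

lemma fourier_fN_eq_zero (h2 : ∀ ξ : ℝ, ξ ∉ Set.Icc (-(1 / 2) : ℝ) (1 / 2) → 𝓕 ⇑φ ξ = 0)
    {N : ℕ} {ξ : ℝ} (hξ : ξ ∉ Set.Icc (1 / 2 : ℝ) (N + 1 / 2)) : 𝓕 (fN φ N) ξ = 0 := by
  rw [fourier_fN]
  refine Finset.sum_eq_zero fun n hn => ?_
  obtain ⟨hn1, hnN⟩ := Finset.mem_Icc.1 hn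
  have hn1' : (1 : ℝ) ≤ n := by exact_mod_cast hn1
  have hnN' : (n : ℝ) ≤ N := by exact_mod_cast hnN
  have hmem : ξ - n ∉ Set.Icc (-(1 / 2) : ℝ) (1 / 2) := fun ⟨hlo, hhi⟩ =>
    hξ ⟨by linarith, by linarith⟩
  rw [h2 _ hmem, mul_zero]

lemma fourier_fN_eq_cexp (h1 : ∀ ξ ∈ Set.Icc (-(1 / 4) : ℝ) (1 / 4), 𝓕 ⇑φ ξ = 1)
    (h2 : ∀ ξ : ℝ, ξ ∉ Set.Icc (-(1 / 2) : ℝ) (1 / 2) → 𝓕 ⇑φ ξ = 0)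
    {N m : ℕ} (hm : m ∈ Finset.Icc 1 N) {ξ : ℝ} (hξ : ξ - m ∈ Set.Icc (-(1 / 4) : ℝ) (1 / 4)) :
    𝓕 (fN φ N) ξ = Complex.exp (2 * Real.pi * Complex.I * (m : ℝ) * (m - ξ : ℝ)) := by
  rw [fourier_fN, Finset.sum_eq_single_of_mem m hm, h1 _ hξ, mul_one]
  intro n _ hnm
  have hmem : ξ - n ∉ Set.Icc (-(1 / 2) : ℝ) (1 / 2) := fun ⟨hlo, hhi⟩ => by
    obtain ⟨hlo', hhi'⟩ := hξ
    rcases hnm.lt_or_gt with h | h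
    · have : (n : ℝ) + 1 ≤ m := by exact_mod_cast h
      linarith
    · have : (m : ℝ) + 1 ≤ n := by exact_mod_cast h
      linarith
  rw [h2 _ hmem, mul_zero]

end TestFunction

section Projection

variable {t : ℝ → ℂ} {φ : SchwartzMap ℝ ℂ} {N k l m : ℕ} {τ x : ℝ}

/-- The interval `I + τ` for the `l`-th interval `I = [k + l/k, k + (l+1)/k]` of the block `ℐ_k`;
meaningful only for `0 < k`. -/
def freqInterval (k l : ℕ) (τ : ℝ) : Set ℝ :=
  Set.Icc (k + l / k + τ) (k + (l + 1) / k + τ)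

lemma freqInterval_subset_Icc (hl : l < k) (τ : ℝ) :
    freqInterval k l τ ⊆ Set.Icc (k + τ) (k + 1 + τ) := by
  have hl' : (l : ℝ) + 1 ≤ k := by exact_mod_cast hl
  have : ((l : ℝ) + 1) / k ≤ 1 := div_le_one_of_le₀ hl' (by positivity)
  have : (0 : ℝ) ≤ l / k := by positivity
  exact Set.Icc_subset_Icc (by linarith) (by linarith)

lemma rescale_mem_Icc_iff_mem_freqInterval (hk : 0 < k) (l : ℕ) (τ ξ : ℝ) :
    (ξ - ((k : ℝ) + ((l : ℝ) + 1 / 2) / k) - τ) * k ∈ Set.Icc (-(1 / 2) : ℝ) (1 / 2) ↔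
      ξ ∈ freqInterval k l τ := by
  have hk' : (0 : ℝ) < k := by exact_mod_cast hk
  rw [freqInterval, Set.mem_Icc, Set.mem_Icc, ← div_le_iff₀ hk', ← le_div_iff₀ hk']
  have hhalf : ((l : ℝ) + 1 / 2) / k = l / k + 1 / 2 / k := add_div ..
  have hone : ((l : ℝ) + 1) / k = l / k + 1 / 2 / k + 1 / 2 / k := by ring
  rw [hhalf, hone, neg_div]
  constructor <;> rintro ⟨_, _⟩ <;> constructor <;> linarith

lemma projV_congr (htsupp : ∀ ξ : ℝ, ξ ∉ Set.Icc (-(1 / 2) : ℝ) (1 / 2) → t ξ = 0) (hk : 0 < k)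
    {g : ℝ → ℂ} (hg : Set.EqOn (𝓕 (fN φ N)) g (freqInterval k l τ)) :
    projV t φ N k l τ x =
      ∫ ξ : ℝ, t ((ξ - ((k : ℝ) + ((l : ℝ) + 1 / 2) / k + τ)) * k) * g ξ *
        Complex.exp (2 * Real.pi * Complex.I * ξ * x) := by
  refine integral_congr_ae (.of_forall fun ξ => ?_)
  simp only [← sub_sub ξ _ τ]
  by_cases hξ : ξ ∈ freqInterval k l τ
  · rw [hg hξ]
  · simp only [htsupp _ ((rescale_mem_Icc_iff_mem_freqInterval hk l τ ξ).not.2 hξ), zero_mul]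

lemma projV_eq_zero (htsupp : ∀ ξ : ℝ, ξ ∉ Set.Icc (-(1 / 2) : ℝ) (1 / 2) → t ξ = 0)
    (hk : 0 < k) (hf : Set.EqOn (𝓕 (fN φ N)) 0 (freqInterval k l τ)) :
    projV t φ N k l τ x = 0 := by
  rw [projV_congr htsupp hk hf]
  simp only [Pi.zero_apply, mul_zero, zero_mul, integral_zero]

-- On `I + τ` the transform of `f_N` is a pure phase, so only a dilated copy of `ℱ⁻¹ t` is left.
lemma norm_projV_eq (htsupp : ∀ ξ : ℝ, ξ ∉ Set.Icc (-(1 / 2) : ℝ) (1 / 2) → t ξ = 0)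
    (h1 : ∀ ξ ∈ Set.Icc (-(1 / 4) : ℝ) (1 / 4), 𝓕 ⇑φ ξ = 1)
    (h2 : ∀ ξ : ℝ, ξ ∉ Set.Icc (-(1 / 2) : ℝ) (1 / 2) → 𝓕 ⇑φ ξ = 0)
    (hk : 0 < k) (hm : m ∈ Finset.Icc 1 N)
    (hI : freqInterval k l τ ⊆ Set.Icc (m - 1 / 4 : ℝ) (m + 1 / 4)) :
    ‖projV t φ N k l τ x‖ = (k : ℝ)⁻¹ *
      ‖∫ u : ℝ, t u * Complex.exp (2 * Real.pi * Complex.I * u * ((x - m) / k : ℝ))‖ := by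
  have hf : Set.EqOn (𝓕 (fN φ N))
      (fun ξ => Complex.exp (2 * Real.pi * Complex.I * (m : ℝ) * (m - ξ : ℝ)))
      (freqInterval k l τ) := fun ξ hξ => by
    obtain ⟨hlo, hhi⟩ := hI hξ
    exact fourier_fN_eq_cexp h1 h2 hm ⟨by linarith, by linarith⟩
  have hphase (ξ : ℝ) : Complex.exp (2 * Real.pi * Complex.I * (m : ℝ) * (m - ξ : ℝ)) *
      Complex.exp (2 * Real.pi * Complex.I * ξ * x) =
      Complex.exp (2 * Real.pi * Complex.I * (m : ℝ) * (m : ℝ)) *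
        Complex.exp (2 * Real.pi * Complex.I * ξ * (x - m : ℝ)) := by
    rw [← Complex.exp_add, ← Complex.exp_add]
    congr 1
    push_cast
    ring
  rw [projV_congr htsupp hk hf]
  simp_rw [mul_assoc (t _), hphase, mul_left_comm (t _)]
  rw [integral_const_mul, norm_mul, norm_cexp_two_pi_mul_I_mul_mul, one_mul,
    norm_integral_comp_sub_mul_mul_cexp t _ _ (by exact_mod_cast hk)]

lemma norm_projV_le (ht : Integrable t) (φ : SchwartzMap ℝ ℂ) (N : ℕ) (hk : 0 < k) (l : ℕ)
    (τ x : ℝ) : ‖projV t φ N k l τ x‖ ≤ (∫ y, ‖fN φ N y‖) * (∫ u, ‖t u‖) / k := by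
  have h := norm_integral_comp_sub_mul_mul_mul_cexp_le ht (norm_fourier_fN_le φ N)
    ((k : ℝ) + ((l : ℝ) + 1 / 2) / k + τ) x (a := k) (by exact_mod_cast hk)
  simpa only [projV, sub_sub] using h

end Projection

section Block

variable {t : ℝ → ℂ} {φ : SchwartzMap ℝ ℂ} {N k m : ℕ} {τ x c₀ : ℝ}

/-- The contribution of the translated block `ℐ_k + τ` to the square `Vsq` of the square
function. -/
noncomputable def blockEnergy (t : ℝ → ℂ) (φ : SchwartzMap ℝ ℂ) (N k : ℕ) (τ x : ℝ) : ℝ :=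
  ∑ l ∈ Finset.range k, ‖projV t φ N k l τ x‖ ^ 2

/-- The indices `k` for which `ℐ_k + τ`, which covers `[k + τ, k + τ + 1]`, can meet the frequency
support `[1/2, N + 1/2]` of `f_N`; possibly with some superfluous ones, so that there are always
`N + 2` of them. -/
noncomputable def activeBlocks (N : ℕ) (τ : ℝ) : Finset ℕ :=
  Finset.Icc ⌈-1 / 2 - τ⌉₊ (⌈-1 / 2 - τ⌉₊ + (N + 1))

lemma card_activeBlocks (N : ℕ) (τ : ℝ) : (activeBlocks N τ).card = N + 2 := by
  rw [activeBlocks, Nat.card_Icc]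
  omega

lemma mem_activeBlocks (hlo : -1 / 2 ≤ k + τ) (hhi : k + τ ≤ N + 1 / 2) :
    k ∈ activeBlocks N τ := by
  have := Nat.le_ceil (-1 / 2 - τ)
  have : (k : ℝ) ≤ ⌈-1 / 2 - τ⌉₊ + (N + 1) := by linarith
  exact Finset.mem_Icc.2 ⟨Nat.ceil_le.2 (by linarith), by exact_mod_cast this⟩

lemma blockEnergy_nonneg (t : ℝ → ℂ) (φ : SchwartzMap ℝ ℂ) (N k : ℕ) (τ x : ℝ) :
    0 ≤ blockEnergy t φ N k τ x :=
  Finset.sum_nonneg fun _ _ => sq_nonneg _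

lemma blockEnergy_eq_zero (htsupp : ∀ ξ : ℝ, ξ ∉ Set.Icc (-(1 / 2) : ℝ) (1 / 2) → t ξ = 0)
    (h2 : ∀ ξ : ℝ, ξ ∉ Set.Icc (-(1 / 2) : ℝ) (1 / 2) → 𝓕 ⇑φ ξ = 0)
    (hk : k ∉ activeBlocks N τ) : blockEnergy t φ N k τ x = 0 := by
  refine Finset.sum_eq_zero fun l hl => ?_
  have hlk := Finset.mem_range.1 hl
  rw [projV_eq_zero htsupp (by omega) fun ξ hξ => fourier_fN_eq_zero h2 fun hξ' => hk ?_,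
    norm_zero, zero_pow two_ne_zero]
  obtain ⟨hlo, hhi⟩ := freqInterval_subset_Icc hlk τ hξ
  exact mem_activeBlocks (by linarith [hξ'.1]) (by linarith [hξ'.2])

lemma blockEnergy_le (ht : Integrable t) (φ : SchwartzMap ℝ ℂ) (N k : ℕ) (τ x : ℝ) :
    blockEnergy t φ N k τ x ≤ ((∫ y, ‖fN φ N y‖) * ∫ u, ‖t u‖) ^ 2 := by
  set C := (∫ y, ‖fN φ N y‖) * ∫ u, ‖t u‖
  rcases k.eq_zero_or_pos with rfl | hk
  · simpa only [blockEnergy, Finset.range_zero, Finset.sum_empty] using sq_nonneg C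
  have hk1 : (1 : ℝ) ≤ k := by exact_mod_cast hk
  calc blockEnergy t φ N k τ x ≤ ∑ _l ∈ Finset.range k, (C / k) ^ 2 :=
        Finset.sum_le_sum fun l _ => by gcongr; exact norm_projV_le ht φ N hk l τ x
    _ = C ^ 2 / k := by
        rw [Finset.sum_const, Finset.card_range, nsmul_eq_mul]
        field_simp
    _ ≤ C ^ 2 := div_le_self (sq_nonneg C) hk1

-- Half of the intervals of `ℐ_k + τ` lie where `φ̂(· - m) = 1`, and each contributes `(c₀ / k)²`.
lemma div_le_blockEnergy (htsupp : ∀ ξ : ℝ, ξ ∉ Set.Icc (-(1 / 2) : ℝ) (1 / 2) → t ξ = 0)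
    (hc₀ : 0 ≤ c₀) (htlow : ∀ y ∈ Set.Icc (-1 : ℝ) 1,
      c₀ ≤ ‖∫ ξ : ℝ, t ξ * Complex.exp (2 * Real.pi * Complex.I * ξ * y)‖)
    (h1 : ∀ ξ ∈ Set.Icc (-(1 / 4) : ℝ) (1 / 4), 𝓕 ⇑φ ξ = 1)
    (h2 : ∀ ξ : ℝ, ξ ∉ Set.Icc (-(1 / 2) : ℝ) (1 / 2) → 𝓕 ⇑φ ξ = 0)
    (hk : 2 ≤ k) (hm : m ∈ Finset.Icc 1 N) (hτ : k + τ = m - 1 / 4) (hx : |x - m| ≤ k) :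
    c₀ ^ 2 / (3 * k) ≤ blockEnergy t φ N k τ x := by
  have hk0 : (0 : ℝ) < k := by positivity
  have hproj : ∀ l ∈ Finset.range (k / 2), c₀ / k ≤ ‖projV t φ N k l τ x‖ := fun l hl => by
    have hlk : ((l : ℝ) + 1) * 2 ≤ k := by
      have := Finset.mem_range.1 hl
      exact_mod_cast (by omega : (l + 1) * 2 ≤ k)
    have hlen : ((l : ℝ) + 1) / k ≤ 1 / 2 := by rw [div_le_div_iff₀ hk0 two_pos]; linarith
    have : (0 : ℝ) ≤ l / k := by positivity
    rw [norm_projV_eq htsupp h1 h2 (by omega) hm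
      (Set.Icc_subset_Icc (by linarith) (by linarith)), div_eq_inv_mul]
    gcongr
    refine htlow _ (abs_le.1 ?_)
    rwa [abs_div, abs_of_pos hk0, div_le_one hk0]
  have hcount : (k : ℝ) ≤ 3 * (k / 2 : ℕ) := by exact_mod_cast (by omega : k ≤ 3 * (k / 2))
  calc c₀ ^ 2 / (3 * k) = k / 3 * (c₀ / k) ^ 2 := by field_simp
    _ ≤ (k / 2 : ℕ) * (c₀ / k) ^ 2 := by gcongr; linarith
    _ = ∑ _l ∈ Finset.range (k / 2), (c₀ / k) ^ 2 := by
        rw [Finset.sum_const, Finset.card_range, nsmul_eq_mul]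
    _ ≤ ∑ l ∈ Finset.range (k / 2), ‖projV t φ N k l τ x‖ ^ 2 :=
        Finset.sum_le_sum fun l hl => by gcongr; exact hproj l hl
    _ ≤ blockEnergy t φ N k τ x :=
        Finset.sum_le_sum_of_subset_of_nonneg (Finset.range_mono (Nat.div_le_self k 2))
          fun _ _ _ => sq_nonneg _

end Block

section SquareFunction

variable {t : ℝ → ℂ} {φ : SchwartzMap ℝ ℂ} {N : ℕ} {x c₀ : ℝ}

lemma Vsq_eq_sum_blockEnergy
    (htsupp : ∀ ξ : ℝ, ξ ∉ Set.Icc (-(1 / 2) : ℝ) (1 / 2) → t ξ = 0)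
    (h2 : ∀ ξ : ℝ, ξ ∉ Set.Icc (-(1 / 2) : ℝ) (1 / 2) → 𝓕 ⇑φ ξ = 0) (N : ℕ) (τ x : ℝ) :
    Vsq t φ N τ x = ∑ k ∈ activeBlocks N τ, blockEnergy t φ N k τ x :=
  tsum_eq_sum fun _ hk => blockEnergy_eq_zero htsupp h2 hk

lemma sum_blockEnergy_le_Vsq
    (htsupp : ∀ ξ : ℝ, ξ ∉ Set.Icc (-(1 / 2) : ℝ) (1 / 2) → t ξ = 0)
    (h2 : ∀ ξ : ℝ, ξ ∉ Set.Icc (-(1 / 2) : ℝ) (1 / 2) → 𝓕 ⇑φ ξ = 0)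
    (N : ℕ) (τ x : ℝ) (s : Finset ℕ) :
    ∑ k ∈ s, blockEnergy t φ N k τ x ≤ Vsq t φ N τ x :=
  (summable_of_ne_finset_zero fun _ hk => blockEnergy_eq_zero htsupp h2 hk).sum_le_tsum s
    fun k _ => blockEnergy_nonneg t φ N k τ x

lemma Vsq_le (ht : Integrable t)
    (htsupp : ∀ ξ : ℝ, ξ ∉ Set.Icc (-(1 / 2) : ℝ) (1 / 2) → t ξ = 0)
    (h2 : ∀ ξ : ℝ, ξ ∉ Set.Icc (-(1 / 2) : ℝ) (1 / 2) → 𝓕 ⇑φ ξ = 0) (N : ℕ) (τ x : ℝ) :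
    Vsq t φ N τ x ≤ (N + 2) * ((∫ y, ‖fN φ N y‖) * ∫ u, ‖t u‖) ^ 2 := by
  rw [Vsq_eq_sum_blockEnergy htsupp h2]
  refine (Finset.sum_le_card_nsmul _ _ _ fun k _ => blockEnergy_le ht φ N k τ x).trans_eq ?_
  rw [card_activeBlocks, nsmul_eq_mul]
  push_cast
  rfl

lemma sqrt_Vsq_le_V2 (ht : Integrable t)
    (htsupp : ∀ ξ : ℝ, ξ ∉ Set.Icc (-(1 / 2) : ℝ) (1 / 2) → t ξ = 0)
    (h2 : ∀ ξ : ℝ, ξ ∉ Set.Icc (-(1 / 2) : ℝ) (1 / 2) → 𝓕 ⇑φ ξ = 0) (N : ℕ) (τ x : ℝ) :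
    Real.sqrt (Vsq t φ N τ x) ≤ V2 t φ N x :=
  le_ciSup (f := fun τ => Real.sqrt (Vsq t φ N τ x))
    ⟨_, Set.forall_mem_range.2 fun σ => Real.sqrt_le_sqrt (Vsq_le ht htsupp h2 N σ x)⟩ τ

-- With `a = ⌊x⌋`, the translation `τ = a - 9/4` puts the frequency `m = a + i` into the block
-- `k = i + 2`, so that `|x - m| ≤ k` and the block contributes `≳ 1 / (i + 1)`.
lemma exists_log_le_Vsq (htsupp : ∀ ξ : ℝ, ξ ∉ Set.Icc (-(1 / 2) : ℝ) (1 / 2) → t ξ = 0)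
    (hc₀ : 0 ≤ c₀) (htlow : ∀ y ∈ Set.Icc (-1 : ℝ) 1,
      c₀ ≤ ‖∫ ξ : ℝ, t ξ * Complex.exp (2 * Real.pi * Complex.I * ξ * y)‖)
    (h1 : ∀ ξ ∈ Set.Icc (-(1 / 4) : ℝ) (1 / 4), 𝓕 ⇑φ ξ = 1)
    (h2 : ∀ ξ : ℝ, ξ ∉ Set.Icc (-(1 / 2) : ℝ) (1 / 2) → 𝓕 ⇑φ ξ = 0)
    (hx : x ∈ Set.Icc (1 : ℝ) (N + 1)) :
    ∃ τ : ℝ, c₀ ^ 2 / 6 * Real.log (N + 2 - x) ≤ Vsq t φ N τ x := by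
  obtain ⟨hx1, hxN⟩ := hx
  set a := ⌊x⌋₊
  have hax : (a : ℝ) ≤ x := Nat.floor_le (by linarith)
  have hxa : x < a + 1 := Nat.lt_floor_add_one x
  have ha1 : 1 ≤ a := Nat.le_floor (by exact_mod_cast hx1)
  have haN : a ≤ N + 1 := by exact_mod_cast hax.trans hxN
  have hblock : ∀ i ∈ Finset.range (N + 1 - a),
      c₀ ^ 2 / 6 * ((i : ℝ) + 1)⁻¹ ≤ blockEnergy t φ N (i + 2) (a - 9 / 4) x := fun i hi => by
    have hiN := Finset.mem_range.1 hi
    have : (0 : ℝ) ≤ i := by positivity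
    refine le_trans ?_ (div_le_blockEnergy htsupp hc₀ htlow h1 h2 (m := a + i) (by omega)
      (Finset.mem_Icc.2 ⟨by omega, by omega⟩) (by push_cast; ring)
      (abs_le.2 ⟨by push_cast; linarith, by push_cast; linarith⟩))
    rw [← div_eq_mul_inv, div_div]
    refine div_le_div_of_nonneg_left (sq_nonneg c₀) (by positivity) ?_
    push_cast
    linarith
  have hM : (N : ℝ) + 2 - x ≤ (N + 1 - a + 1 : ℕ) := by
    rw [Nat.cast_add, Nat.cast_sub haN]
    push_cast
    linarith
  refine ⟨a - 9 / 4, ?_⟩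
  calc c₀ ^ 2 / 6 * Real.log (N + 2 - x) ≤ c₀ ^ 2 / 6 * harmonic (N + 1 - a) := by
        gcongr
        exact (Real.log_le_log (by linarith) hM).trans (log_add_one_le_harmonic _)
    _ = ∑ i ∈ Finset.range (N + 1 - a), c₀ ^ 2 / 6 * ((i : ℝ) + 1)⁻¹ := by
        simp only [harmonic, Rat.cast_sum, Finset.mul_sum]
        push_cast
        rfl
    _ ≤ ∑ i ∈ Finset.range (N + 1 - a), blockEnergy t φ N (i + 2) (a - 9 / 4) x :=
        Finset.sum_le_sum hblock
    _ = ∑ k ∈ (Finset.range (N + 1 - a)).map (addRightEmbedding 2),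
          blockEnergy t φ N k (a - 9 / 4) x := by
        simp only [Finset.sum_map, addRightEmbedding_apply]
    _ ≤ Vsq t φ N (a - 9 / 4) x := sum_blockEnergy_le_Vsq htsupp h2 ..

lemma log_le_two_mul_log_half_add_one {y : ℝ} (hy : 0 < y) :
    Real.log y ≤ 2 * Real.log (y / 2 + 1) := by
  rw [← Nat.cast_two, ← Real.log_pow]
  exact Real.log_le_log hy (by nlinarith)

lemma exists_sqrt_log_le_sqrt_Vsq
    (htsupp : ∀ ξ : ℝ, ξ ∉ Set.Icc (-(1 / 2) : ℝ) (1 / 2) → t ξ = 0)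
    (hc₀ : 0 ≤ c₀) (htlow : ∀ y ∈ Set.Icc (-1 : ℝ) 1,
      c₀ ≤ ‖∫ ξ : ℝ, t ξ * Complex.exp (2 * Real.pi * Complex.I * ξ * y)‖)
    (h1 : ∀ ξ ∈ Set.Icc (-(1 / 4) : ℝ) (1 / 4), 𝓕 ⇑φ ξ = 1)
    (h2 : ∀ ξ : ℝ, ξ ∉ Set.Icc (-(1 / 2) : ℝ) (1 / 2) → 𝓕 ⇑φ ξ = 0)
    (hN : 1 ≤ N) (hx : x ∈ Set.Icc (1 : ℝ) (N / 2 + 1)) :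
    ∃ τ : ℝ, c₀ / 4 * Real.sqrt (Real.log N) ≤ Real.sqrt (Vsq t φ N τ x) := by
  have hN0 : (0 : ℝ) < N := by exact_mod_cast hN
  obtain ⟨τ, hτ⟩ := exists_log_le_Vsq (N := N) htsupp hc₀ htlow h1 h2
    (Set.Icc_subset_Icc_right (by linarith) hx)
  have hlog : Real.log N ≤ 2 * Real.log (N + 2 - x) := by
    refine (log_le_two_mul_log_half_add_one hN0).trans ?_
    gcongr
    linarith [hx.2]
  refine ⟨τ, Real.le_sqrt_of_sq_le (le_trans ?_ hτ)⟩
  rw [mul_pow, Real.sq_sqrt (Real.log_natCast_nonneg N)]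
  calc (c₀ / 4) ^ 2 * Real.log N ≤ c₀ ^ 2 / 12 * Real.log N := by
        have := mul_nonneg (sq_nonneg c₀) (Real.log_natCast_nonneg N)
        linarith
    _ ≤ c₀ ^ 2 / 12 * (2 * Real.log (N + 2 - x)) := by gcongr
    _ = c₀ ^ 2 / 6 * Real.log (N + 2 - x) := by ring

end SquareFunction


section LpBounds

variable {α E : Type*} [MeasurableSpace α] [NormedAddCommGroup E] {μ : Measure α}

lemma lintegral_rpow_le_rpow_sub_mul_lintegral_rpow {g : α → ℝ≥0∞} {A : ℝ≥0∞} (hA : A ≠ ∞)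
    (hg : ∀ x, g x ≤ A) {p q : ℝ} (hq : 0 ≤ q) (hqp : q ≤ p) :
    ∫⁻ x, g x ^ p ∂μ ≤ A ^ (p - q) * ∫⁻ x, g x ^ q ∂μ := by
  have hpq : 0 ≤ p - q := sub_nonneg.2 hqp
  rw [← lintegral_const_mul' _ _ (ENNReal.rpow_ne_top_of_nonneg hpq hA)]
  refine lintegral_mono fun x => ?_
  calc g x ^ p = g x ^ (p - q) * g x ^ q := by
        rw [← ENNReal.rpow_add_of_nonneg _ _ hpq hq, sub_add_cancel]
    _ ≤ A ^ (p - q) * g x ^ q := by gcongr; exact hg x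

lemma lintegral_rpow_finset_sum_le {ι : Type*} (s : Finset ι) {g : ι → α → ℝ≥0∞}
    (hg : ∀ i ∈ s, AEMeasurable (g i) μ) {q : ℝ} (hq : 0 < q) (hq1 : q ≤ 1) :
    ∫⁻ x, (∑ i ∈ s, g i x) ^ q ∂μ ≤ ∑ i ∈ s, ∫⁻ x, g i x ^ q ∂μ := by
  rw [← lintegral_finsetSum' s fun i hi => (hg i hi).pow_const q]
  exact lintegral_mono fun x => Finset.le_sum_of_subadditive (· ^ q)
    (ENNReal.zero_rpow_of_pos hq).le (fun a b => ENNReal.rpow_add_le_add_rpow a b hq.le hq1)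
    s (g · x)

lemma ofReal_mul_measure_rpow_le_eLpNorm {f : α → E} {s : Set α} (hs : MeasurableSet s)
    (hμs : μ s ≠ 0) {p : ℝ≥0∞} (hp : p ≠ 0) {c : ℝ} (hf : ∀ x ∈ s, c ≤ ‖f x‖) :
    ENNReal.ofReal c * μ s ^ (1 / p.toReal) ≤ eLpNorm f p μ := by
  rcases le_total c 0 with hc | hc
  · rw [ENNReal.ofReal_of_nonpos hc, zero_mul]
    exact zero_le
  rw [← Real.enorm_of_nonneg hc, ← eLpNorm_indicator_const' hs hμs hp]
  refine eLpNorm_mono fun x => ?_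
  by_cases hx : x ∈ s
  · rw [Set.indicator_of_mem hx, Real.norm_of_nonneg hc]
    exact hf x hx
  · rw [Set.indicator_of_notMem hx, norm_zero]
    exact norm_nonneg _

end LpBounds

section UniformBounds

open Filter Asymptotics TopologicalSpace

lemma exists_forall_sum_norm_sub_int_le {E : Type*} [NormedAddCommGroup E] {f : ℝ → E}
    (hc : Continuous f) {b : ℝ} (hb : 1 < b) (hf : f =O[cocompact ℝ] fun x : ℝ => |x| ^ (-b)) :
    ∃ A : ℝ, ∀ (x : ℝ) (s : Finset ℤ), ∑ n ∈ s, ‖f (x - n)‖ ≤ A := by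
  let K : Compacts ℝ := ⟨Set.Icc 0 1, isCompact_Icc⟩
  let F : C(ℝ, E) := ⟨f, hc⟩
  let M (n : ℤ) : ℝ := ‖(F.comp (ContinuousMap.addRight (n : ℝ))).restrict K‖
  have hM : Summable M := summable_of_isBigO (Real.summable_abs_int_rpow hb)
    ((isBigO_norm_restrict_cocompact F (zero_lt_one.trans hb) hf K).comp_tendsto
      Int.tendsto_coe_cofinite)
  refine ⟨∑' n, M n, fun x s => ?_⟩
  have hle (n : ℤ) : ‖f (x - n)‖ ≤ M (⌊x⌋ - n) := by
    have hfract : Int.fract x ∈ K := ⟨Int.fract_nonneg x, (Int.fract_lt_one x).le⟩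
    have hx : x - n = Int.fract x + (⌊x⌋ - n : ℤ) := by
      rw [Int.cast_sub, ← add_sub_assoc, Int.fract_add_floor]
    rw [hx]
    exact ((F.comp (ContinuousMap.addRight ((⌊x⌋ - n : ℤ) : ℝ))).restrict K).norm_coe_le_norm
      ⟨_, hfract⟩
  calc ∑ n ∈ s, ‖f (x - n)‖ ≤ ∑ n ∈ s, M (⌊x⌋ - n) := Finset.sum_le_sum fun n _ => hle n
    _ = ∑ n ∈ s.map (Equiv.subLeft ⌊x⌋).toEmbedding, M n := by
        simp only [Finset.sum_map, Equiv.coe_toEmbedding, Equiv.subLeft_apply]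
    _ ≤ ∑' n, M n := hM.sum_le_tsum _ fun n _ => norm_nonneg _

lemma norm_fN_le_sum (φ : SchwartzMap ℝ ℂ) (N : ℕ) (x : ℝ) :
    ‖fN φ N x‖ ≤ ∑ n ∈ Finset.Icc 1 N, ‖φ (x - n)‖ :=
  (norm_sum_le _ _).trans_eq <| Finset.sum_congr rfl fun n _ => by
    rw [norm_mul, norm_cexp_two_pi_mul_I_mul_mul, mul_one]

lemma exists_forall_norm_fN_le (φ : SchwartzMap ℝ ℂ) : ∃ A : ℝ, ∀ N x, ‖fN φ N x‖ ≤ A := by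
  obtain ⟨A, hA⟩ := exists_forall_sum_norm_sub_int_le φ.continuous one_lt_two
    (φ.isBigO_cocompact_rpow (-2))
  refine ⟨A, fun N x => (norm_fN_le_sum φ N x).trans ?_⟩
  simpa only [Finset.sum_map, Nat.castEmbedding_apply, Int.cast_natCast] using
    hA x ((Finset.Icc 1 N).map Nat.castEmbedding)

lemma lintegral_enorm_fN_rpow_le (φ : SchwartzMap ℝ ℂ) (N : ℕ) {q : ℝ} (hq : 0 < q)
    (hq1 : q ≤ 1) : ∫⁻ x, ‖fN φ N x‖ₑ ^ q ≤ N * ∫⁻ x, ‖φ x‖ₑ ^ q := by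
  have hle (x : ℝ) : ‖fN φ N x‖ₑ ≤ ∑ n ∈ Finset.Icc 1 N, ‖φ (x - n)‖ₑ := by
    simp_rw [← ofReal_norm, ← ENNReal.ofReal_sum_of_nonneg fun _ _ => norm_nonneg _]
    exact ENNReal.ofReal_le_ofReal (norm_fN_le_sum φ N x)
  calc ∫⁻ x, ‖fN φ N x‖ₑ ^ q ≤ ∫⁻ x, (∑ n ∈ Finset.Icc 1 N, ‖φ (x - n)‖ₑ) ^ q :=
        lintegral_mono fun x => by gcongr; exact hle x
    _ ≤ ∑ n ∈ Finset.Icc 1 N, ∫⁻ x, ‖φ (x - n)‖ₑ ^ q :=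
        lintegral_rpow_finset_sum_le _ (fun n _ => by fun_prop) hq hq1
    _ = N * ∫⁻ x, ‖φ x‖ₑ ^ q := by
        simp only [lintegral_sub_right_eq_self (fun x => ‖φ x‖ₑ ^ q), Finset.sum_const,
          Nat.card_Icc, add_tsub_cancel_right, nsmul_eq_mul]

-- Subadditivity of `r ↦ r ^ q` needs `q ≤ 1`; for `p > 1` the uniform bound of `f_N` reduces the
-- exponent to `q = 1`.
lemma exists_eLpNorm_fN_le (φ : SchwartzMap ℝ ℂ) {p : ℝ≥0∞} (hp : p ≠ 0) :
    ∃ B : ℝ≥0, ∀ N : ℕ, eLpNorm (fN φ N) p volume ≤ B * (N : ℝ≥0∞) ^ (1 / p.toReal) := by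
  obtain ⟨A, hA⟩ := exists_forall_norm_fN_le φ
  have hAe (N : ℕ) (x : ℝ) : ‖fN φ N x‖ₑ ≤ A.toNNReal := by
    rw [← ofReal_norm]
    exact ENNReal.ofReal_le_ofReal (hA N x)
  rcases eq_or_ne p ∞ with rfl | hp'
  · refine ⟨A.toNNReal, fun N => ?_⟩
    simpa only [ENNReal.toReal_top, div_zero, ENNReal.rpow_zero, mul_one, eLpNorm_exponent_top]
      using eLpNormEssSup_le_of_ae_enorm_bound (.of_forall (hAe N))
  have hp0 : 0 < p.toReal := ENNReal.toReal_pos hp hp'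
  set q := min p.toReal 1
  have hq : 0 < q := lt_min hp0 one_pos
  have hfin : ∫⁻ x, ‖φ x‖ₑ ^ q < ∞ := by
    have := lintegral_rpow_enorm_lt_top_of_eLpNorm_lt_top (ENNReal.ofReal_pos.2 hq).ne'
      ENNReal.ofReal_ne_top (φ.eLpNorm_lt_top (ENNReal.ofReal q) volume)
    rwa [ENNReal.toReal_ofReal hq.le] at this
  set D : ℝ≥0∞ := A.toNNReal ^ (p.toReal - q) * ∫⁻ x, ‖φ x‖ₑ ^ q
  have hD : D ^ (1 / p.toReal) ≠ ∞ := by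
    refine ENNReal.rpow_ne_top_of_nonneg (by positivity) (ENNReal.mul_ne_top ?_ hfin.ne)
    exact ENNReal.rpow_ne_top_of_nonneg (sub_nonneg.2 (min_le_left _ _)) ENNReal.coe_ne_top
  refine ⟨(D ^ (1 / p.toReal)).toNNReal, fun N => ?_⟩
  rw [ENNReal.coe_toNNReal hD, ← ENNReal.mul_rpow_of_nonneg _ _ (by positivity),
    eLpNorm_eq_lintegral_rpow_enorm_toReal hp hp']
  gcongr
  calc ∫⁻ x, ‖fN φ N x‖ₑ ^ p.toReal
      ≤ A.toNNReal ^ (p.toReal - q) * ∫⁻ x, ‖fN φ N x‖ₑ ^ q :=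
        lintegral_rpow_le_rpow_sub_mul_lintegral_rpow ENNReal.coe_ne_top (hAe N) hq.le
          (min_le_left _ _)
    _ ≤ A.toNNReal ^ (p.toReal - q) * (N * ∫⁻ x, ‖φ x‖ₑ ^ q) := by
        gcongr
        exact lintegral_enorm_fN_rpow_le φ N hq (min_le_right _ _)
    _ = D * N := by ring

end UniformBounds

section LpLowerBound

variable {t : ℝ → ℂ} {φ : SchwartzMap ℝ ℂ} {c₀ : ℝ} {p : ℝ≥0∞}

lemma integrable_of_pos_le_norm_integral_mul_cexp (hc₀ : 0 < c₀) (htlow : ∀ y ∈ Set.Icc (-1 : ℝ) 1,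
      c₀ ≤ ‖∫ ξ : ℝ, t ξ * Complex.exp (2 * Real.pi * Complex.I * ξ * y)‖) : Integrable t := by
  refine .of_integral_ne_zero (norm_pos_iff.1 (hc₀.trans_le ?_))
  simpa only [Complex.ofReal_zero, mul_zero, Complex.exp_zero, mul_one] using htlow 0 (by simp)

lemma ofReal_le_eLpNorm_V2
    (htsupp : ∀ ξ : ℝ, ξ ∉ Set.Icc (-(1 / 2) : ℝ) (1 / 2) → t ξ = 0)
    (hc₀ : 0 < c₀) (htlow : ∀ y ∈ Set.Icc (-1 : ℝ) 1,
      c₀ ≤ ‖∫ ξ : ℝ, t ξ * Complex.exp (2 * Real.pi * Complex.I * ξ * y)‖)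
    (h1 : ∀ ξ ∈ Set.Icc (-(1 / 4) : ℝ) (1 / 4), 𝓕 ⇑φ ξ = 1)
    (h2 : ∀ ξ : ℝ, ξ ∉ Set.Icc (-(1 / 2) : ℝ) (1 / 2) → 𝓕 ⇑φ ξ = 0)
    (hp : p ≠ 0) {N : ℕ} (hN : 1 ≤ N) :
    ENNReal.ofReal (c₀ / 4 * Real.sqrt (Real.log N) * (N / 2 : ℝ) ^ (1 / p.toReal)) ≤
      eLpNorm (V2 t φ N) p volume := by
  have ht := integrable_of_pos_le_norm_integral_mul_cexp hc₀ htlow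
  have hN2 : (0 : ℝ) < N / 2 := by positivity
  have hvol : volume (Set.Icc (1 : ℝ) (N / 2 + 1)) = ENNReal.ofReal (N / 2) := by
    rw [Real.volume_Icc, add_sub_cancel_right]
  have hV2 : ∀ x ∈ Set.Icc (1 : ℝ) (N / 2 + 1),
      c₀ / 4 * Real.sqrt (Real.log N) ≤ ‖V2 t φ N x‖ := fun x hx => by
    obtain ⟨τ, hτ⟩ := exists_sqrt_log_le_sqrt_Vsq htsupp hc₀.le htlow h1 h2 hN hx
    exact hτ.trans ((sqrt_Vsq_le_V2 ht htsupp h2 N τ x).trans (Real.le_norm_self _))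
  rw [ENNReal.ofReal_mul (by positivity), ← ENNReal.ofReal_rpow_of_pos hN2, ← hvol]
  refine ofReal_mul_measure_rpow_le_eLpNorm measurableSet_Icc ?_ hp hV2
  rw [hvol]
  exact (ENNReal.ofReal_pos.2 hN2).ne'

lemma exists_ofReal_mul_eLpNorm_fN_le_eLpNorm_V2
    (htsupp : ∀ ξ : ℝ, ξ ∉ Set.Icc (-(1 / 2) : ℝ) (1 / 2) → t ξ = 0)
    (hc₀ : 0 < c₀) (htlow : ∀ y ∈ Set.Icc (-1 : ℝ) 1,
      c₀ ≤ ‖∫ ξ : ℝ, t ξ * Complex.exp (2 * Real.pi * Complex.I * ξ * y)‖)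
    (h1 : ∀ ξ ∈ Set.Icc (-(1 / 4) : ℝ) (1 / 4), 𝓕 ⇑φ ξ = 1)
    (h2 : ∀ ξ : ℝ, ξ ∉ Set.Icc (-(1 / 2) : ℝ) (1 / 2) → 𝓕 ⇑φ ξ = 0) (hp : p ≠ 0) :
    ∃ c : ℝ, 0 < c ∧ ∀ N : ℕ, 1 ≤ N →
      ENNReal.ofReal (c * Real.sqrt (Real.log N)) * eLpNorm (fN φ N) p volume ≤
        eLpNorm (V2 t φ N) p volume := by
  obtain ⟨B, hB⟩ := exists_eLpNorm_fN_le φ hp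
  set r := 1 / p.toReal
  refine ⟨c₀ / 4 / ((B + 1) * 2 ^ r), by positivity, fun N hN => ?_⟩
  set s := Real.sqrt (Real.log N)
  have hBN : (B * (N : ℝ≥0∞) ^ r : ℝ≥0∞) = ENNReal.ofReal (B * (N : ℝ) ^ r) := by
    rw [ENNReal.ofReal_mul B.coe_nonneg, ENNReal.ofReal_coe_nnreal,
      ← ENNReal.ofReal_rpow_of_nonneg N.cast_nonneg (by positivity), ENNReal.ofReal_natCast]
  calc ENNReal.ofReal (c₀ / 4 / ((B + 1) * 2 ^ r) * s) * eLpNorm (fN φ N) p volume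
      ≤ ENNReal.ofReal (c₀ / 4 / ((B + 1) * 2 ^ r) * s) * ENNReal.ofReal (B * (N : ℝ) ^ r) := by
        gcongr
        exact (hB N).trans_eq hBN
    _ = ENNReal.ofReal (c₀ / 4 * s * (N / 2 : ℝ) ^ r * (B / (B + 1))) := by
        rw [← ENNReal.ofReal_mul (by positivity), Real.div_rpow N.cast_nonneg zero_le_two]
        congr 1
        field_simp
    _ ≤ ENNReal.ofReal (c₀ / 4 * s * (N / 2 : ℝ) ^ r) := by
        refine ENNReal.ofReal_le_ofReal (mul_le_of_le_one_right (by positivity) ?_)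
        exact div_le_one_of_le₀ (by linarith) (by positivity)
    _ ≤ eLpNorm (V2 t φ N) p volume := ofReal_le_eLpNorm_V2 htsupp hc₀ htlow h1 h2 hp hN

end LpLowerBound

theorem stmt_16_general (t : ℝ → ℂ)
    (htsupp : ∀ ξ : ℝ, ξ ∉ Set.Icc (-(1 / 2) : ℝ) (1 / 2) → t ξ = 0)
    (c₀ : ℝ) (hc₀ : 0 < c₀)
    (htlow : ∀ y ∈ Set.Icc (-1 : ℝ) 1,
      c₀ ≤ ‖∫ ξ : ℝ, t ξ * Complex.exp (2 * Real.pi * Complex.I * ξ * y)‖)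
    (φ : SchwartzMap ℝ ℂ)
    (h1 : ∀ ξ ∈ Set.Icc (-(1 / 4) : ℝ) (1 / 4), 𝓕 ⇑φ ξ = 1)
    (h2 : ∀ ξ : ℝ, ξ ∉ Set.Icc (-(1 / 2) : ℝ) (1 / 2) → 𝓕 ⇑φ ξ = 0) :
    (∃ c : ℝ, 0 < c ∧ ∀ N : ℕ, 2 ≤ N → ∀ x ∈ Set.Icc (1 : ℝ) (N / 2),
      ∃ τ : ℝ, c * Real.sqrt (Real.log N) ≤ Real.sqrt (Vsq t φ N τ x)) ∧
    ∀ p : ℝ≥0∞, p ≠ 0 → ∃ cp : ℝ, 0 < cp ∧ ∀ N : ℕ, 2 ≤ N →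
      ENNReal.ofReal (cp * Real.sqrt (Real.log N)) * eLpNorm (fN φ N) p volume ≤
        eLpNorm (V2 t φ N) p volume := by
  refine ⟨⟨c₀ / 4, by positivity, fun N hN x hx => ?_⟩, fun p hp => ?_⟩
  · exact exists_sqrt_log_le_sqrt_Vsq htsupp hc₀.le htlow h1 h2 (by omega)
      (Set.Icc_subset_Icc_right (by linarith) hx)
  · obtain ⟨c, hc, hle⟩ := exists_ofReal_mul_eLpNorm_fN_le_eLpNorm_V2 htsupp hc₀ htlow h1 h2 hp
    exact ⟨c, hc, fun N hN => hle N (by omega)⟩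

/-- `𝒱₂` counterexample: with `1̃ ∈ C^∞([-1/2,1/2])`, `|ℱ^{-1}1̃| ≳ 1_{[-2,2]}`, and
`φ̂` sandwiched between `1_{[-1/4,1/4]}` and `1_{[-1/2,1/2]}`, one has
`𝒱₂(f_N)(x) ≳ (log N)^{1/2}` on `[1, N/2]`, and hence
`‖𝒱₂(f_N)‖_p ≳ (log N)^{1/2}‖f_N‖_p` for every `1 ≤ p < ∞`. -/
theorem stmt_16 (t : ℝ → ℂ)
    (htsupp : ∀ ξ : ℝ, ξ ∉ Set.Icc (-(1/2) : ℝ) (1/2) → t ξ = 0)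
    (c₀ : ℝ) (hc₀ : 0 < c₀)
    (htlow : ∀ x ∈ Set.Icc (-2 : ℝ) 2,
      c₀ ≤ ‖∫ ξ : ℝ, t ξ * Complex.exp (2 * Real.pi * Complex.I * ξ * x)‖)
    (φ : SchwartzMap ℝ ℂ)
    (h1 : ∀ ξ ∈ Set.Icc (-(1/4) : ℝ) (1/4), 𝓕 ⇑φ ξ = 1)
    (h2 : ∀ ξ : ℝ, ξ ∉ Set.Icc (-(1/2) : ℝ) (1/2) → 𝓕 ⇑φ ξ = 0)
    (h3 : ∀ ξ : ℝ, (𝓕 ⇑φ ξ).im = 0 ∧ 0 ≤ (𝓕 ⇑φ ξ).re ∧ (𝓕 ⇑φ ξ).re ≤ 1) :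
    (∃ c : ℝ, 0 < c ∧ ∀ N : ℕ, 2 ≤ N → ∀ x ∈ Set.Icc (1 : ℝ) (N / 2),
      ∃ τ : ℝ, c * Real.sqrt (Real.log N) ≤ Real.sqrt (Vsq t φ N τ x)) ∧
    ∀ p : ℝ, 1 ≤ p → ∃ cp : ℝ, 0 < cp ∧ ∀ N : ℕ, 2 ≤ N →
      ENNReal.ofReal (cp * Real.sqrt (Real.log N)) *
          eLpNorm (fN φ N) (ENNReal.ofReal p) volume ≤
        eLpNorm (V2 t φ N) (ENNReal.ofReal p) volume := by
  obtain ⟨hpt, hLp⟩ := stmt_16_general t htsupp c₀ hc₀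
    (fun y hy => htlow y (Set.Icc_subset_Icc (by norm_num) (by norm_num) hy)) φ h1 h2
  exact ⟨hpt, fun p hp => hLp _ (ENNReal.ofReal_pos.2 (by linarith)).ne'⟩
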